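/- For every n, d ≥ 1 and every f ∈ ℝ[x₁,…,xₙ] with deg f ≤ 2d, there exists N ≥ 0 such that f + N·(1 + Σ_{i=1}^n xᵢ^{2d}) is a sum of squares of polynomials of degree at most d. In particular, the feasible set {λ ∈ ℝ₊^{n+1} : f + λ₀ + Σ_{i=1}^n λᵢ xᵢ^{2d} ∈ Σ[x]_d} is nonempty. -/

import Mathlib

open MvPolynomial Finset

/-- The ℓ₁-norm of the coefficient vector of a polynomial. -/
noncomputable def l1Norm {n : ℕ} (f : MvPolynomial (Fin n) ℝ) : ℝ :=
  ∑ α ∈ f.support, |f.coeff α|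

/-- `IsSOS d g` : `g` is a sum of squares of polynomials of degree at most `d`
(i.e. `g ∈ Σ[x]_d`). -/
def IsSOS {n : ℕ} (d : ℕ) (g : MvPolynomial (Fin n) ℝ) : Prop :=
  ∃ (k : ℕ) (h : Fin k → MvPolynomial (Fin n) ℝ),
    (∀ i, (h i).totalDegree ≤ d) ∧ g = ∑ i, (h i) ^ 2

/-- `rho d f = inf {‖f - g‖₁ : g ∈ Σ[x]_d}`. -/
noncomputable def rho {n : ℕ} (d : ℕ) (f : MvPolynomial (Fin n) ℝ) : ℝ :=
  sInf {r : ℝ | ∃ g, IsSOS d g ∧ r = l1Norm (f - g)}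

lemma IsSOS.add' {n d : ℕ} {p q : MvPolynomial (Fin n) ℝ} (hp : IsSOS d p) (hq : IsSOS d q) :
    IsSOS d (p + q) := by
  obtain ⟨k, g, hg, rfl⟩ := hp
  obtain ⟨l, h, hh, rfl⟩ := hq
  refine ⟨k + l, Fin.append g h, ?_, ?_⟩
  · intro i
    refine Fin.addCases (fun i => ?_) (fun i => ?_) i
    · simpa using hg i
    · simpa using hh i
  · simp [Fin.sum_univ_add]

lemma IsSOS.zero' {n d : ℕ} : IsSOS d (0 : MvPolynomial (Fin n) ℝ) :=
  ⟨0, fun _ => 0, fun i => i.elim0, by simp⟩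

lemma IsSOS.sq' {n d : ℕ} {p : MvPolynomial (Fin n) ℝ} (hp : p.totalDegree ≤ d) :
    IsSOS d (p ^ 2) :=
  ⟨1, fun _ => p, fun _ => hp, by simp⟩

lemma IsSOS.sum' {n d : ℕ} {ι : Type*} (s : Finset ι) (g : ι → MvPolynomial (Fin n) ℝ)
    (h : ∀ i ∈ s, IsSOS d (g i)) : IsSOS d (∑ i ∈ s, g i) := by
  classical
  induction s using Finset.induction_on with
  | empty => simpa using IsSOS.zero'
  | insert a s ha ih =>
    rw [Finset.sum_insert ha]
    exact (h a (by simp)).add' (ih fun i hi => h i (by simp [hi]))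

lemma IsSOS.smul' {n d : ℕ} {p : MvPolynomial (Fin n) ℝ} (hp : IsSOS d p) {c : ℝ} (hc : 0 ≤ c) :
    IsSOS d (C c * p) := by
  obtain ⟨k, g, hg, rfl⟩ := hp
  refine ⟨k, fun i => C (Real.sqrt c) * g i, fun i => ?_, ?_⟩
  · refine (totalDegree_mul _ _).trans ?_
    simpa using hg i
  · rw [Finset.mul_sum]
    refine Finset.sum_congr rfl fun i _ => ?_
    rw [mul_pow, ← C_pow, Real.sq_sqrt hc]

lemma IsSOS.two_var {n d : ℕ} (u v m : MvPolynomial (Fin n) ℝ) (hu : u.totalDegree ≤ 1)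
    (hv : v.totalDegree ≤ 1) (a b : ℕ) (hm : a + b + m.totalDegree ≤ d) :
    IsSOS d (m ^ 2 * (u ^ (2 * (a + b)) + v ^ (2 * (a + b)) - u ^ (2 * a) * v ^ (2 * b))) := by
  have key : m ^ 2 * (u ^ (2 * (a + b)) + v ^ (2 * (a + b)) - u ^ (2 * a) * v ^ (2 * b))
      = (m * (u ^ b * v ^ a)) ^ 2 + ∑ i ∈ range a, ∑ j ∈ range b,
        (m * ((u ^ 2 - v ^ 2) * (u ^ i * v ^ (a - 1 - i) * (u ^ j * v ^ (b - 1 - j))))) ^ 2 := by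
    have h1 := (Commute.all (u ^ 2) (v ^ 2)).mul_geom_sum₂ a
    have h2 := (Commute.all (u ^ 2) (v ^ 2)).mul_geom_sum₂ b
    have h3 : ∑ i ∈ range a, ∑ j ∈ range b,
        (m * ((u ^ 2 - v ^ 2) * (u ^ i * v ^ (a - 1 - i) * (u ^ j * v ^ (b - 1 - j))))) ^ 2
        = m ^ 2 * (((u ^ 2 - v ^ 2) * ∑ i ∈ range a, (u ^ 2) ^ i * (v ^ 2) ^ (a - 1 - i)) *
          ((u ^ 2 - v ^ 2) * ∑ i ∈ range b, (u ^ 2) ^ i * (v ^ 2) ^ (b - 1 - i))) := by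
      rw [mul_mul_mul_comm, Finset.sum_mul_sum]
      simp only [Finset.mul_sum]
      refine Finset.sum_congr rfl fun i _ => Finset.sum_congr rfl fun j _ => ?_
      ring
    rw [h3, h1, h2]
    ring
  have tp : ∀ (w : MvPolynomial (Fin n) ℝ) (k : ℕ), w.totalDegree ≤ 1 →
      (w ^ k).totalDegree ≤ k := fun w k hw =>
    (totalDegree_pow w k).trans (by nlinarith)
  rw [key]
  refine (IsSOS.sq' ?_).add' (IsSOS.sum' _ _ fun i hi => IsSOS.sum' _ _ fun j hj => IsSOS.sq' ?_)
  · refine (totalDegree_mul _ _).trans ?_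
    have := totalDegree_mul (u ^ b) (v ^ a)
    have := tp u b hu
    have := tp v a hv
    omega
  · have hi := Finset.mem_range.1 hi
    have hj := Finset.mem_range.1 hj
    have := totalDegree_mul m ((u ^ 2 - v ^ 2) * (u ^ i * v ^ (a - 1 - i) * (u ^ j * v ^ (b - 1 - j))))
    have := totalDegree_mul (u ^ 2 - v ^ 2) (u ^ i * v ^ (a - 1 - i) * (u ^ j * v ^ (b - 1 - j)))
    have := totalDegree_mul (u ^ i * v ^ (a - 1 - i)) (u ^ j * v ^ (b - 1 - j))
    have := totalDegree_mul (u ^ i) (v ^ (a - 1 - i))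
    have := totalDegree_mul (u ^ j) (v ^ (b - 1 - j))
    have := totalDegree_sub (u ^ 2) (v ^ 2)
    have := tp u 2 hu
    have := tp v 2 hv
    have := tp u i hu
    have := tp u j hu
    have := tp v (a - 1 - i) hv
    have := tp v (b - 1 - j) hv
    have : (u ^ 2 - v ^ 2).totalDegree ≤ 2 := by
      refine (totalDegree_sub _ _).trans (max_le ?_ ?_) <;> assumption
    omega

/-- `p` is dominated by a multiple of `1 + ∑ xᵢ^{2d}`. -/
def SosDom {n : ℕ} (d : ℕ) (p : MvPolynomial (Fin n) ℝ) : Prop :=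
  ∃ N : ℝ, 0 ≤ N ∧ IsSOS d (C N * (1 + ∑ i : Fin n, X i ^ (2 * d)) - p)

lemma SosDom.add' {n d : ℕ} {p q : MvPolynomial (Fin n) ℝ} (hp : SosDom d p) (hq : SosDom d q) :
    SosDom d (p + q) := by
  obtain ⟨N, hN, h⟩ := hp
  obtain ⟨M, hM, h'⟩ := hq
  refine ⟨N + M, by positivity, ?_⟩
  convert h.add' h' using 1
  rw [C_add]; ring

lemma SosDom.zero' {n d : ℕ} : SosDom d (0 : MvPolynomial (Fin n) ℝ) :=
  ⟨0, le_rfl, by simpa using IsSOS.zero'⟩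

lemma SosDom.smul' {n d : ℕ} {p : MvPolynomial (Fin n) ℝ} (hp : SosDom d p) {c : ℝ} (hc : 0 ≤ c) :
    SosDom d (C c * p) := by
  obtain ⟨N, hN, h⟩ := hp
  refine ⟨c * N, by positivity, ?_⟩
  convert h.smul' hc using 1
  rw [C_mul]; ring

lemma SosDom.of_le {n d : ℕ} {p q : MvPolynomial (Fin n) ℝ} (hq : SosDom d q)
    (h : IsSOS d (q - p)) : SosDom d p := by
  obtain ⟨N, hN, h'⟩ := hq
  refine ⟨N, hN, ?_⟩
  convert h'.add' h using 1
  ring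

lemma SosDom.sum' {n d : ℕ} {ι : Type*} (s : Finset ι) (g : ι → MvPolynomial (Fin n) ℝ)
    (h : ∀ i ∈ s, SosDom d (g i)) : SosDom d (∑ i ∈ s, g i) := by
  classical
  induction s using Finset.induction_on with
  | empty => simpa using SosDom.zero'
  | insert a s ha ih =>
    rw [Finset.sum_insert ha]
    exact (h a (by simp)).add' (ih fun i hi => h i (by simp [hi]))

lemma isSOS_pow {n d : ℕ} (i : Fin n) : IsSOS d (X i ^ (2 * d) : MvPolynomial (Fin n) ℝ) := by
  rw [mul_comm, pow_mul]
  exact IsSOS.sq' (by simp [totalDegree_X_pow])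

lemma SosDom.one' {n d : ℕ} : SosDom d (1 : MvPolynomial (Fin n) ℝ) := by
  refine ⟨1, zero_le_one, ?_⟩
  convert IsSOS.sum' Finset.univ _ fun i _ => isSOS_pow (n := n) (d := d) i using 1
  simp

lemma SosDom.top {n d : ℕ} (j : Fin n) : SosDom d (X j ^ (2 * d) : MvPolynomial (Fin n) ℝ) := by
  classical
  refine ⟨1, zero_le_one, ?_⟩
  have h1 : IsSOS d (1 : MvPolynomial (Fin n) ℝ) := by
    simpa using IsSOS.sq' (p := (1 : MvPolynomial (Fin n) ℝ)) (d := d) (by simp)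
  convert h1.add' (IsSOS.sum' (Finset.univ.erase j) _ fun i _ => isSOS_pow (n := n) (d := d) i)
    using 1
  rw [← Finset.add_sum_erase _ _ (Finset.mem_univ j)]
  simp only [C_1]
  ring

lemma SosDom.pow' {n d : ℕ} (j : Fin n) (b : ℕ) (hb : b ≤ d) :
    SosDom d (X j ^ (2 * b) : MvPolynomial (Fin n) ℝ) := by
  refine SosDom.of_le ((SosDom.top j).add' SosDom.one') ?_
  have := IsSOS.two_var (n := n) (d := d) (X j) 1 1 (by simp) (by simp) b (d - b) (by simp; omega)
  rw [Nat.add_sub_cancel' hb] at this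
  simpa using this

lemma SosDom.prod' {n d : ℕ} (β : Fin n → ℕ) (s : Finset (Fin n)) :
    ∀ (u : MvPolynomial (Fin n) ℝ) (_ : u.totalDegree ≤ 1)
      (_ : ∀ b, b ≤ d → SosDom d (u ^ (2 * b))) (b : ℕ) (_ : b + ∑ i ∈ s, β i ≤ d),
      SosDom d ((∏ i ∈ s, X i ^ β i) ^ 2 * u ^ (2 * b)) := by
  classical
  induction s using Finset.induction_on with
  | empty => intro u hu h b hb; simpa using h b (by simpa using hb)
  | insert a s ha ih =>
    intro u hu h b hb
    rw [Finset.sum_insert ha] at hb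
    rw [Finset.prod_insert ha]
    have e1 := ih u hu h (b + β a) (by omega)
    have e2 := ih (X a) (by simp) (fun c hc => SosDom.pow' a c hc) (b + β a) (by omega)
    refine (e1.add' e2).of_le ?_
    have hm : (∏ i ∈ s, (X i : MvPolynomial (Fin n) ℝ) ^ β i).totalDegree ≤ ∑ i ∈ s, β i :=
      (totalDegree_finset_prod _ _).trans (Finset.sum_le_sum fun i _ => by
        simp [totalDegree_X_pow])
    have := IsSOS.two_var (d := d) u (X a) (∏ i ∈ s, X i ^ β i) hu (by simp) b (β a) (by omega)
    convert this using 1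
    ring

lemma SosDom.monomial_sq {n d : ℕ} (β : Fin n →₀ ℕ) (hβ : ∑ i, β i ≤ d) :
    SosDom d ((monomial β (1 : ℝ)) ^ 2) := by
  have := SosDom.prod' (d := d) β Finset.univ 1 (by simp)
    (fun b _ => by simpa using SosDom.one') 0 (by simpa using hβ)
  rw [monomial_eq, Finsupp.prod_fintype _ _ (by simp)]
  simpa using this

lemma split_exp {n : ℕ} (d : ℕ) : ∀ (e : ℕ) (α : Fin n →₀ ℕ), ∑ i, α i ≤ d + e →
    ∃ β γ : Fin n →₀ ℕ, α = β + γ ∧ ∑ i, β i ≤ d ∧ ∑ i, γ i ≤ e := by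
  classical
  intro e
  induction e with
  | zero => intro α h; exact ⟨α, 0, by simp, by simpa using h, by simp⟩
  | succ e ih =>
    intro α h
    by_cases h0 : α = 0
    · exact ⟨0, 0, by simp [h0], by simp, by simp⟩
    · obtain ⟨i, hi⟩ := Finsupp.ne_iff.1 h0
      have hle : Finsupp.single i 1 ≤ α := by
        rw [Finsupp.single_le_iff]
        exact Nat.one_le_iff_ne_zero.2 hi
      obtain ⟨δ, rfl⟩ := exists_add_of_le hle
      have hs : ∑ j, (Finsupp.single i 1 : Fin n →₀ ℕ) j = 1 := by
        simp [Finsupp.single_apply]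
      simp only [Finsupp.add_apply, Finset.sum_add_distrib, hs] at h
      obtain ⟨β, γ, rfl, h1, h2⟩ := ih δ (by omega)
      refine ⟨β, Finsupp.single i 1 + γ, by abel, h1, ?_⟩
      simp only [Finsupp.add_apply, Finset.sum_add_distrib, hs]
      omega

lemma SosDom.monomial' {n d : ℕ} (α : Fin n →₀ ℕ) (hα : ∑ i, α i ≤ 2 * d) (c : ℝ) :
    SosDom d (monomial α c) := by
  obtain ⟨β, γ, rfl, h1, h2⟩ := split_exp d d α (by omega)
  have e := ((SosDom.monomial_sq β h1).add'
    ((SosDom.monomial_sq γ h2).smul' (sq_nonneg c))).smul' (c := 1 / 2) (by norm_num)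
  refine e.of_le ?_
  have deg : ∀ (δ : Fin n →₀ ℕ) (c : ℝ), ∑ i, δ i ≤ d → (monomial δ c).totalDegree ≤ d := by
    intro δ c h
    refine (totalDegree_monomial_le _ _).trans ?_
    rwa [Finsupp.sum_fintype _ _ (by simp)]
  have s : IsSOS d ((monomial β (1 : ℝ) - monomial γ c) ^ 2) := IsSOS.sq'
    ((totalDegree_sub _ _).trans (max_le (deg β 1 h1) (deg γ c h2)))
  convert s.smul' (c := 1 / 2) (by norm_num) using 1
  have m1 : monomial γ c = C c * monomial γ (1 : ℝ) := by simp [C_mul_monomial]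
  have m2 : monomial (β + γ) c = C c * (monomial β (1 : ℝ) * monomial γ (1 : ℝ)) := by
    simp [C_mul_monomial, monomial_mul]
  have hh : (C (1 / 2) : MvPolynomial (Fin n) ℝ) * 2 = 1 := by
    rw [show (2 : MvPolynomial (Fin n) ℝ) = C 2 from rfl, ← C_mul]; norm_num
  rw [m1, m2, C_pow]
  linear_combination (C c * (monomial β (1 : ℝ) * monomial γ (1 : ℝ))) * hh

/-- For every `f` with `deg f ≤ 2d` there is `N ≥ 0` such that
`f + N(1 + ∑ᵢ xᵢ^{2d})` is a sum of squares of polynomials of degree at most `d`;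
in particular the feasible set of the semidefinite program (7) is nonempty. -/
theorem feasible_set_nonempty {n d : ℕ} (hd : 1 ≤ d) (f : MvPolynomial (Fin n) ℝ)
    (hf : f.totalDegree ≤ 2 * d) :
    (∃ N : ℝ, 0 ≤ N ∧ IsSOS d (f + C N * (1 + ∑ i : Fin n, X i ^ (2 * d)))) ∧
    {l : Fin (n + 1) → ℝ | (∀ i, 0 ≤ l i) ∧
      IsSOS d (f + C (l 0) + ∑ i : Fin n, C (l i.succ) * X i ^ (2 * d))}.Nonempty := by
  have main : ∃ N : ℝ, 0 ≤ N ∧ IsSOS d (f + C N * (1 + ∑ i : Fin n, X i ^ (2 * d))) := by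
    have h : SosDom d (∑ α ∈ f.support, monomial α (-f.coeff α)) := by
      refine SosDom.sum' _ _ fun α hα => SosDom.monomial' α ?_ _
      have := (le_totalDegree hα).trans hf
      rwa [Finsupp.sum_fintype _ _ (by simp)] at this
    have e : ∑ α ∈ f.support, monomial α (-f.coeff α) = -f := by
      conv_rhs => rw [f.as_sum]
      simp
    rw [e] at h
    obtain ⟨N, hN, h⟩ := h
    refine ⟨N, hN, ?_⟩
    convert h using 1
    ring
  refine ⟨main, ?_⟩
  obtain ⟨N, hN, h⟩ := main
  refine ⟨fun _ => N, fun _ => hN, ?_⟩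
  convert h using 1
  rw [← Finset.mul_sum]
  ring
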